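/- arXiv:2110.10264 — 13 statements merged into one kernel-verified Lean document; each statement's English description precedes it below -/
import Mathlib

section
/- Let R be a commutative ring and N a proper ideal of R. Then N is an r-ideal if and only if (aR) ∩ N = aN for every regular element a of R. -/
/-- A proper ideal `N` of a commutative ring is an `r`-ideal if whenever
`a * b ∈ N` and `ann(a) = 0` (i.e. `a` is regular), then `b ∈ N`. -/
def IsRIdeal {R : Type*} [CommRing R] (N : Ideal R) : Prop :=
  N ≠ ⊤ ∧ ∀ a b : R, a * b ∈ N → (∀ r : R, r * a = 0 → r = 0) → b ∈ N

/-!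
Since `aR` is the range of multiplication by `a`, the intersection `aR ∩ N` is the image under this
map of the colon ideal `(N : a) = {b | a * b ∈ N}`. Multiplication by a regular `a` is injective,
so `aR ∩ N = aN` says exactly that `(N : a) = N`.
-/

theorem preimage_mul_left_eq_self_iff {R : Type*} [Semiring R] (N : Ideal R) (a : R) :
    (a * ·) ⁻¹' (N : Set R) = N ↔ ∀ b, a * b ∈ N → b ∈ N :=
  ⟨fun h _ hab => h.subset hab, fun h => Set.Subset.antisymm h fun _ => N.mul_mem_left a⟩

section CommSemiring

variable {R : Type*} [CommSemiring R]

theorem coe_span_singleton_eq_range_mul_left (a : R) :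
    (Ideal.span {a} : Set R) = Set.range (a * ·) := by
  ext x
  simp only [SetLike.mem_coe, Ideal.mem_span_singleton, Set.mem_range, dvd_def, eq_comm]

theorem span_singleton_inter_eq_image_mul_left_iff {a : R} (ha : IsLeftRegular a) (N : Ideal R) :
    (Ideal.span {a} : Set R) ∩ N = (a * ·) '' (N : Set R) ↔ ∀ b, a * b ∈ N → b ∈ N := by
  rw [coe_span_singleton_eq_range_mul_left, ← Set.image_preimage_eq_range_inter,
    ha.image_injective.eq_iff, preimage_mul_left_eq_self_iff]

end CommSemiring

theorem isLeftRegular_iff_left_eq_zero_of_mul {R : Type*} [NonUnitalNonAssocCommRing R] {a : R} :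
    IsLeftRegular a ↔ ∀ r, r * a = 0 → r = 0 := by
  rw [← Commute.isRightRegular_iff (Commute.all a), isRightRegular_iff_left_eq_zero_of_mul]

theorem isRIdeal_iff_forall_isLeftRegular {R : Type*} [CommRing R] {N : Ideal R} :
    IsRIdeal N ↔ N ≠ ⊤ ∧ ∀ a, IsLeftRegular a → ∀ b, a * b ∈ N → b ∈ N := by
  simp only [IsRIdeal, isLeftRegular_iff_left_eq_zero_of_mul]
  exact and_congr_right' ⟨fun h a ha b hab => h a b hab ha, fun h a b hab ha => h a ha b hab⟩

/-- `N` is an `r`-ideal iff `(aR) ∩ N = aN` for every regular `a`. -/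
theorem rIdeal_iff_span_inter_eq_image {R : Type*} [CommRing R] (N : Ideal R)
    (hN : N ≠ ⊤) :
    IsRIdeal N ↔
      ∀ a : R, (∀ r : R, r * a = 0 → r = 0) →
        ((Ideal.span {a} : Ideal R) : Set R) ∩ (N : Set R) = (a * ·) '' (N : Set R) := by
  rw [isRIdeal_iff_forall_isLeftRegular, and_iff_right hN]
  simp only [← isLeftRegular_iff_left_eq_zero_of_mul]
  exact forall₂_congr fun a ha => (span_singleton_inter_eq_image_mul_left_iff ha N).symm
end

section
/- Let R be a commutative ring and N a proper ideal of R. Then N is an r-ideal if and only if N = Mᶜ for some ideal M of the total quotient ring Q(R), i.e., N is the contraction of some ideal of Q(R) along the canonical homomorphism R → Q(R). -/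
open scoped nonZeroDivisors

theorem mul_mem_comap_iff_of_isUnit_map {R S F : Type*} [Semiring R] [Semiring S]
    [FunLike F R S] [RingHomClass F R S] {f : F} {s x : R} (hs : IsUnit (f s)) (J : Ideal S) :
    s * x ∈ J.comap f ↔ x ∈ J.comap f := by
  simp only [Ideal.mem_comap, map_mul, J.unit_mul_mem_iff_mem hs]

section Localization

variable {R : Type*} [CommSemiring R] (S : Submonoid R)
  (A : Type*) [CommSemiring A] [Algebra R A] [IsLocalization S A] {I : Ideal R}

theorem comap_map_algebraMap_eq_iff_forall_mul_mem :
    (I.map (algebraMap R A)).comap (algebraMap R A) = I ↔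
      ∀ s ∈ S, ∀ x, s * x ∈ I → x ∈ I := by
  have saturation_le_iff : (I.map (algebraMap R A)).comap (algebraMap R A) ≤ I ↔
      ∀ s ∈ S, ∀ x, s * x ∈ I → x ∈ I := by
    simp only [SetLike.le_def, Ideal.mem_comap,
      IsLocalization.algebraMap_mem_map_algebraMap_iff S]
    exact ⟨fun h s hs x hx ↦ h ⟨s, hs, hx⟩, fun h x ⟨s, hs, hx⟩ ↦ h s hs x hx⟩
  rw [← saturation_le_iff]
  exact ⟨le_of_eq, fun h ↦ h.antisymm Ideal.le_comap_map⟩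

theorem exists_eq_comap_algebraMap_iff_forall_mul_mem :
    (∃ J : Ideal A, I = J.comap (algebraMap R A)) ↔ ∀ s ∈ S, ∀ x, s * x ∈ I → x ∈ I := by
  constructor
  · rintro ⟨J, rfl⟩ s hs x
    exact (mul_mem_comap_iff_of_isUnit_map (IsLocalization.map_units A ⟨s, hs⟩) J).mp
  · intro h
    exact ⟨_, ((comap_map_algebraMap_eq_iff_forall_mul_mem S A).mpr h).symm⟩

end Localization

theorem isRIdeal_iff_forall_mem_nonZeroDivisors {R : Type*} [CommRing R] {N : Ideal R} :
    IsRIdeal N ↔ N ≠ ⊤ ∧ ∀ s ∈ R⁰, ∀ x, s * x ∈ N → x ∈ N := by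
  simp only [IsRIdeal, mem_nonZeroDivisors_iff_right]
  exact and_congr_right' ⟨fun h s hs x hx ↦ h s x hx hs, fun h s x hx hs ↦ h s hs x hx⟩

/-- `N` is an `r`-ideal iff it is the contraction of some ideal of the
total quotient ring `Q(R)` (the localization at the set of non-zero-divisors). -/
theorem rIdeal_iff_contraction {R : Type*} [CommRing R] (N : Ideal R) (hN : N ≠ ⊤) :
    IsRIdeal N ↔
      ∃ M : Ideal (FractionRing R),
        N = M.comap (algebraMap R (FractionRing R)) := by
  rw [isRIdeal_iff_forall_mem_nonZeroDivisors, and_iff_right hN,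
    exists_eq_comap_algebraMap_iff_forall_mul_mem R⁰]
end

section
/- Let R be a commutative ring. A prime ideal P of R is an r-ideal if and only if P consists entirely of zero divisors, i.e., P ⊆ zd(R). -/
open scoped nonZeroDivisors

theorem disjoint_nonZeroDivisors_iff_forall_exists_mul_eq_zero {M : Type*} [CommMonoidWithZero M]
    {s : Set M} : Disjoint s (M⁰ : Set M) ↔ ∀ x ∈ s, ∃ r : M, r ≠ 0 ∧ r * x = 0 := by
  simp only [Set.disjoint_left, SetLike.mem_coe, notMem_nonZeroDivisors_iff_right,
    Set.Nonempty, Set.mem_ofPred_eq, and_comm]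

section

variable {R : Type*} [CommRing R]

theorem IsRIdeal.disjoint_nonZeroDivisors {N : Ideal R} (hN : IsRIdeal N) :
    Disjoint (N : Set R) (R⁰ : Set R) := by
  obtain ⟨ne_top, mem_of_mul_mem⟩ := hN
  refine Set.disjoint_left.mpr fun x hxN hx_regular => N.ne_top_iff_one.mp ne_top ?_
  have hx_mul_one : x * 1 ∈ N := by rwa [mul_one]
  exact mem_of_mul_mem x 1 hx_mul_one (mem_nonZeroDivisors_iff_right.mp hx_regular)

theorem isRIdeal_of_isPrime_of_disjoint_nonZeroDivisors {P : Ideal R} (hP : P.IsPrime)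
    (hdisj : Disjoint (P : Set R) (R⁰ : Set R)) : IsRIdeal P := by
  refine ⟨hP.ne_top, fun a b hab ha_regular => (hP.mem_or_mem hab).resolve_left fun haP => ?_⟩
  exact Set.disjoint_left.mp hdisj haP (mem_nonZeroDivisors_iff_right.mpr ha_regular)

end

/-- a prime ideal `P` is an `r`-ideal iff it consists of zero divisors. -/
theorem prime_rIdeal_iff_subset_zeroDivisors {R : Type*} [CommRing R] (P : Ideal R)
    (hP : P.IsPrime) :
    IsRIdeal P ↔ ∀ x ∈ P, ∃ r : R, r ≠ 0 ∧ r * x = 0 :=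
  calc
    IsRIdeal P ↔ Disjoint (P : Set R) (R⁰ : Set R) :=
      ⟨IsRIdeal.disjoint_nonZeroDivisors, isRIdeal_of_isPrime_of_disjoint_nonZeroDivisors hP⟩
    _ ↔ ∀ x ∈ P, ∃ r : R, r ≠ 0 ∧ r * x = 0 :=
      disjoint_nonZeroDivisors_iff_forall_exists_mul_eq_zero
end

section
/- Let R be a commutative ring, N an r-ideal of R, and S a subset of R with S ⊄ N. Then (N : S) = {r ∈ R : r·s ∈ N for all s ∈ S} is an r-ideal of R. In particular, for every nonzero x ∈ R, the annihilator ann(x) is an r-ideal of R. -/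
/-- The ideal `(N : S) = {r ∈ R : r • s ∈ N for all s ∈ S}`. -/
def colonSet {R : Type*} [CommRing R] (N : Ideal R) (S : Set R) : Ideal R where
  carrier := {r : R | ∀ s ∈ S, r * s ∈ N}
  add_mem' := by
    intro a b ha hb s hs
    rw [add_mul]; exact N.add_mem (ha s hs) (hb s hs)
  zero_mem' := by intro s hs; simp
  smul_mem' := by
    intro c a ha s hs
    simp only [smul_eq_mul, mul_assoc]
    exact N.mul_mem_left c (ha s hs)

/-- The annihilator ideal `ann(x) = {r ∈ R : r * x = 0}`. -/
def annIdeal {R : Type*} [CommRing R] (x : R) : Ideal R where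
  carrier := {r : R | r * x = 0}
  add_mem' := by
    intro a b ha hb
    simp only [Set.mem_setOf_eq] at *
    rw [add_mul, ha, hb, add_zero]
  zero_mem' := by simp
  smul_mem' := by
    intro c a ha
    simp only [Set.mem_setOf_eq, smul_eq_mul] at *
    rw [mul_assoc, ha, mul_zero]

section

variable {R : Type*} [CommRing R]

theorem mem_colonSet {N : Ideal R} {S : Set R} {r : R} :
    r ∈ colonSet N S ↔ ∀ s ∈ S, r * s ∈ N :=
  Iff.rfl

theorem mem_annIdeal {x r : R} : r ∈ annIdeal x ↔ r * x = 0 :=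
  Iff.rfl

theorem colonSet_eq_top_iff {N : Ideal R} {S : Set R} :
    colonSet N S = ⊤ ↔ S ⊆ (N : Set R) := by
  simp only [Ideal.eq_top_iff_one, mem_colonSet, one_mul, Set.subset_def, SetLike.mem_coe]

theorem colonSet_bot_singleton (x : R) : colonSet ⊥ {x} = annIdeal x := by
  ext r
  simp only [mem_colonSet, mem_annIdeal, Set.mem_singleton_iff, forall_eq, Ideal.mem_bot]

theorem isRIdeal_colonSet {N : Ideal R} (hN : IsRIdeal N) {S : Set R}
    (hS : ¬S ⊆ (N : Set R)) : IsRIdeal (colonSet N S) := by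
  refine ⟨mt colonSet_eq_top_iff.mp hS, fun a b hab ha s hs ↦ ?_⟩
  have habs : a * (b * s) ∈ N := mul_assoc a b s ▸ hab s hs
  exact hN.2 a (b * s) habs ha

theorem isRIdeal_bot [Nontrivial R] : IsRIdeal (⊥ : Ideal R) :=
  ⟨bot_ne_top, fun a b hab ha ↦ ha b (mul_comm a b ▸ hab)⟩

theorem isRIdeal_annIdeal {x : R} (hx : x ≠ 0) : IsRIdeal (annIdeal x) := by
  have : Nontrivial R := nontrivial_of_ne x 0 hx
  have hx_bot : ¬{x} ⊆ ((⊥ : Ideal R) : Set R) := by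
    simpa only [Set.singleton_subset_iff, SetLike.mem_coe, Ideal.mem_bot] using hx
  rw [← colonSet_bot_singleton]
  exact isRIdeal_colonSet isRIdeal_bot hx_bot

end

/-- if `N` is an `r`-ideal and `S ⊄ N`, then `(N : S)` is an `r`-ideal;
in particular, `ann(x)` is an `r`-ideal for every nonzero `x`. -/
theorem colon_isRIdeal {R : Type*} [CommRing R] (N : Ideal R) (hN : IsRIdeal N)
    (S : Set R) (hS : ¬ S ⊆ (N : Set R)) :
    IsRIdeal (colonSet N S) ∧ ∀ x : R, x ≠ 0 → IsRIdeal (annIdeal x) :=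
  ⟨isRIdeal_colonSet hN hS, fun _ hx ↦ isRIdeal_annIdeal hx⟩
end

section
/- Let R be a commutative ring. Every proper pure ideal of R is an r-ideal, and every proper von Neumann regular ideal of R is an r-ideal. -/
/-- Pure (left) ideals, in the elementwise form: every element of `N` is fixed under right
multiplication by some element of `N`. -/
def IsPureIdeal {R : Type*} [Semiring R] (N : Ideal R) : Prop :=
  ∀ a ∈ N, ∃ b ∈ N, a = a * b

/-- Von Neumann regular ideals: every element of `N` is von Neumann regular in `R`; the
quasi-inverse `b` is not required to lie in `N`. -/
def IsVonNeumannRegularIdeal {R : Type*} [CommSemiring R] (N : Ideal R) : Prop :=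
  ∀ a ∈ N, ∃ b : R, a = a ^ 2 * b

theorem IsPureIdeal.mem_of_mul_mem {R : Type*} [Semiring R] {N : Ideal R} (hN : IsPureIdeal N)
    {a b : R} (ha : IsLeftRegular a) (hab : a * b ∈ N) : b ∈ N := by
  obtain ⟨c, hc, habc⟩ := hN (a * b) hab
  have hbc : b = b * c := ha (habc.trans (mul_assoc a b c))
  exact hbc ▸ N.mul_mem_left b hc

theorem IsPureIdeal.isRIdeal {R : Type*} [CommRing R] {N : Ideal R} (hN : IsPureIdeal N)
    (hN_top : N ≠ ⊤) : IsRIdeal N := by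
  refine ⟨hN_top, fun a b hab hann ↦ hN.mem_of_mul_mem ?_ hab⟩
  exact isLeftRegular_of_non_zero_divisor a fun r har ↦ hann r (mul_comm r a ▸ har)

theorem IsVonNeumannRegularIdeal.isPureIdeal {R : Type*} [CommSemiring R] {N : Ideal R}
    (hN : IsVonNeumannRegularIdeal N) : IsPureIdeal N := by
  intro a ha
  obtain ⟨b, hb⟩ := hN a ha
  refine ⟨a * b, N.mul_mem_right b ha, ?_⟩
  calc
    a = a ^ 2 * b := hb
    _ = a * (a * b) := by ring

/-- every proper pure ideal is an `r`-ideal, and every proper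
von Neumann regular ideal is an `r`-ideal. -/
theorem pure_and_vonNeumannRegular_isRIdeal {R : Type*} [CommRing R] (N : Ideal R)
    (hN : N ≠ ⊤) :
    ((∀ a ∈ N, ∃ b ∈ N, a = a * b) → IsRIdeal N) ∧
    ((∀ a ∈ N, ∃ b : R, a = a ^ 2 * b) → IsRIdeal N) := by
  constructor
  · intro (hpure : IsPureIdeal N)
    exact hpure.isRIdeal hN
  · intro (hreg : IsVonNeumannRegularIdeal N)
    exact hreg.isPureIdeal.isRIdeal hN
end

section
/- Let R be a commutative ring and N a proper ideal of R. Then N is an r-ideal if and only if for all ideals J and K of R such that J contains a regular element (J ∩ r(R) ≠ ∅) and J·K ⊆ N, one has K ⊆ N. -/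
theorem forall_mem_of_mul_mem_iff_forall_le_of_mul_le {R : Type*} [CommSemiring R]
    (N : Ideal R) (a : R) :
    (∀ b : R, a * b ∈ N → b ∈ N) ↔ ∀ J K : Ideal R, a ∈ J → J * K ≤ N → K ≤ N := by
  constructor
  · intro cancel J K haJ hJK b hbK
    exact cancel b (hJK (Ideal.mul_mem_mul haJ hbK))
  · intro cancel b hab
    have span_mul_span_le : Ideal.span {a} * Ideal.span {b} ≤ N := by
      rwa [Ideal.span_singleton_mul_span_singleton, Ideal.span_singleton_le_iff_mem]
    exact cancel _ _ (Ideal.mem_span_singleton_self a) span_mul_span_le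
      (Ideal.mem_span_singleton_self b)

/-- `N` is an `r`-ideal iff for all ideals `J, K` with `J` containing a
regular element and `J * K ⊆ N`, one has `K ⊆ N`. -/
theorem rIdeal_iff_ideal_condition {R : Type*} [CommRing R] (N : Ideal R)
    (hN : N ≠ ⊤) :
    IsRIdeal N ↔
      ∀ J K : Ideal R, (∃ a ∈ J, ∀ r : R, r * a = 0 → r = 0) → J * K ≤ N →
        K ≤ N := by
  constructor
  · rintro ⟨-, cancel⟩ J K ⟨a, haJ, ha⟩
    exact (forall_mem_of_mul_mem_iff_forall_le_of_mul_le N a).mp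
      (fun b hab ↦ cancel a b hab ha) J K haJ
  · intro cancel
    refine ⟨hN, fun a b hab ha ↦ ?_⟩
    exact (forall_mem_of_mul_mem_iff_forall_le_of_mul_le N a).mpr
      (fun J K haJ ↦ cancel J K ⟨a, haJ, ha⟩) b hab
end

section
/- Let R be a commutative ring, N an ideal of R containing a regular element (N ∩ r(R) ≠ ∅), and let J and K be r-ideals of R. If N·J = N·K or N ∩ J = N ∩ K, then J = K. -/
namespace IsRIdeal

variable {R : Type*} [CommRing R] {N I K : Ideal R}

theorem le_of_mul_le (hK : IsRIdeal K) (hN : ∃ a ∈ N, ∀ r : R, r * a = 0 → r = 0)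
    (h : N * I ≤ K) : I ≤ K := by
  obtain ⟨a, haN, ha⟩ := hN
  exact fun x hx ↦ hK.2 a x (h (Ideal.mul_mem_mul haN hx)) ha

theorem le_of_mul_le_mul_left (hK : IsRIdeal K) (hN : ∃ a ∈ N, ∀ r : R, r * a = 0 → r = 0)
    (h : N * I ≤ N * K) : I ≤ K :=
  hK.le_of_mul_le hN (h.trans Ideal.mul_le_right)

theorem le_of_inf_le_inf_left (hK : IsRIdeal K) (hN : ∃ a ∈ N, ∀ r : R, r * a = 0 → r = 0)
    (h : N ⊓ I ≤ N ⊓ K) : I ≤ K :=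
  hK.le_of_mul_le hN <| calc
    N * I ≤ N ⊓ I := Ideal.mul_le_inf
    _ ≤ N ⊓ K := h
    _ ≤ K := inf_le_right

end IsRIdeal

/-- if `N` contains a regular element, `J, K` are `r`-ideals and
`N * J = N * K` or `N ⊓ J = N ⊓ K`, then `J = K`. -/
theorem rIdeal_cancellation {R : Type*} [CommRing R] (N J K : Ideal R)
    (hNreg : ∃ a ∈ N, ∀ r : R, r * a = 0 → r = 0)
    (hJ : IsRIdeal J) (hK : IsRIdeal K)
    (h : N * J = N * K ∨ N ⊓ J = N ⊓ K) : J = K := by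
  rcases h with hmul | hinf
  · exact le_antisymm (hK.le_of_mul_le_mul_left hNreg hmul.le)
      (hJ.le_of_mul_le_mul_left hNreg hmul.ge)
  · exact le_antisymm (hK.le_of_inf_le_inf_left hNreg hinf.le)
      (hJ.le_of_inf_le_inf_left hNreg hinf.ge)
end

section
/- Let R be a commutative ring, and let N and M be ideals of R such that M contains a regular element (M ∩ r(R) ≠ ∅). If the product N·M is an r-ideal of R, then N = N·M; in particular, N is an r-ideal of R. -/
theorem IsRIdeal.le_of_mul_le_s9 {R : Type*} [CommRing R] {I N M : Ideal R} (hI : IsRIdeal I)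
    (hM : ∃ a ∈ M, ∀ r : R, r * a = 0 → r = 0) (hNM : N * M ≤ I) : N ≤ I := by
  obtain ⟨a, haM, ha⟩ := hM
  intro x hx
  have hax : a * x ∈ I := hNM (Ideal.mul_mem_mul_rev hx haM)
  exact hI.2 a x hax ha

/-- if `M` contains a regular element and `N * M` is an `r`-ideal,
then `N = N * M` and `N` is an `r`-ideal. -/
theorem rIdeal_of_mul_rIdeal {R : Type*} [CommRing R] (N M : Ideal R)
    (hMreg : ∃ a ∈ M, ∀ r : R, r * a = 0 → r = 0)
    (h : IsRIdeal (N * M)) : N = N * M ∧ IsRIdeal N := by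
  have hN : N = N * M := le_antisymm (h.le_of_mul_le_s9 hMreg le_rfl) Ideal.mul_le_left
  exact ⟨hN, hN.symm ▸ h⟩
end

section
/- Let R be a commutative ring and let I₁, I₂, …, Iₙ be prime ideals of R that are pairwise incomparable (Iᵢ ⊄ Iⱼ whenever i ≠ j). If the intersection ⋂ᵢ₌₁ⁿ Iᵢ is an r-ideal of R, then each Iᵢ is an r-ideal of R. -/
/-!
Proper colon ideals `N : S` of an `r`-ideal `N` are again `r`-ideals. If `P` is prime and
`J ⊄ P`, then `P` is such a colon ideal of `P ∩ J`, namely `P = (P ∩ J) : J`. Take `P = Iᵢ` and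
`J = ⋂_{j ≠ i} Iⱼ`; then `J ⊄ P`, since a prime containing a finite intersection of ideals contains
one of them.
-/

theorem colon_eq_self_of_isPrime {R : Type*} [Semiring R] {P : Ideal R} [P.IsTwoSided]
    (hP : P.IsPrime) {S : Set R} (hS : ¬ S ⊆ P) : P.colon S = P := by
  obtain ⟨s, hsS, hsP⟩ := Set.not_subset.mp hS
  refine le_antisymm (fun r hr ↦ ?_) Ideal.le_colon
  exact (hP.mem_or_mem (Submodule.mem_colon.mp hr s hsS)).resolve_right hsP

theorem inf_colon_eq_left_of_isPrime {R : Type*} [Semiring R] {P J : Ideal R} [P.IsTwoSided]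
    (hP : P.IsPrime) (hJ : ¬ J ≤ P) : (P ⊓ J).colon (J : Set R) = P := by
  rw [Submodule.colon_inf_eq_left_of_subset subset_rfl]
  exact colon_eq_self_of_isPrime hP hJ

theorem not_iInf_ne_le_of_isPrime {R ι : Type*} [CommSemiring R] [Finite ι] {I : ι → Ideal R}
    {P : Ideal R} (hP : P.IsPrime) {i : ι} (hI : ∀ j, j ≠ i → ¬ I j ≤ P) :
    ¬ (⨅ (j) (_ : j ≠ i), I j) ≤ P := by
  classical
  have := Fintype.ofFinite ι
  intro hle
  have hinf : (Finset.univ.erase i).inf I ≤ P := by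
    simpa [Finset.inf_eq_iInf] using hle
  obtain ⟨j, hj, hjP⟩ := hP.inf_le'.mp hinf
  exact hI j (Finset.ne_of_mem_erase hj) hjP

section

variable {R : Type*} [CommRing R]

theorem IsRIdeal.colon {N : Ideal R} (hN : IsRIdeal N) {S : Set R} (hS : ¬ S ⊆ N) :
    IsRIdeal (N.colon S) := by
  refine ⟨mt (Submodule.colon_eq_top_iff_subset S).mp hS, fun a b hab ha ↦ ?_⟩
  refine Submodule.mem_colon.mpr fun s hs ↦ hN.2 a (b * s) ?_ ha
  simpa only [smul_eq_mul, mul_assoc] using Submodule.mem_colon.mp hab s hs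

theorem IsRIdeal.left_of_inf_of_isPrime {P J : Ideal R} (hPJ : IsRIdeal (P ⊓ J))
    (hP : P.IsPrime) (hJ : ¬ J ≤ P) : IsRIdeal P := by
  have hcolon : IsRIdeal ((P ⊓ J).colon (J : Set R)) :=
    hPJ.colon fun hsub ↦ hJ (le_inf_iff.mp hsub).1
  rwa [inf_colon_eq_left_of_isPrime hP hJ] at hcolon

theorem rIdeal_of_inf_primes_general {ι : Type*} [Finite ι] {I : ι → Ideal R} {i : ι}
    (hprime : (I i).IsPrime) (hI : ∀ j, j ≠ i → ¬ I j ≤ I i) (hinf : IsRIdeal (⨅ j, I j)) :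
    IsRIdeal (I i) := by
  rw [iInf_split_single I i] at hinf
  exact hinf.left_of_inf_of_isPrime hprime (not_iInf_ne_le_of_isPrime hprime hI)

end

/-- if `I₁, …, Iₙ` are pairwise incomparable prime ideals whose
intersection is an `r`-ideal, then each `Iᵢ` is an `r`-ideal. -/
theorem rIdeal_of_inf_primes {R : Type*} [CommRing R] (n : ℕ) (I : Fin n → Ideal R)
    (hprime : ∀ i, (I i).IsPrime)
    (hincomp : ∀ i j, i ≠ j → ¬ I i ≤ I j)
    (hinf : IsRIdeal (⨅ i, I i)) :
    ∀ i, IsRIdeal (I i) :=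
  fun i ↦ rIdeal_of_inf_primes_general (hprime i) (fun j ↦ hincomp j i) hinf
end

section
/- Let R be a nontrivial commutative ring. The following statements are equivalent: (a) R is an integral domain; (b) the zero ideal is the only r-ideal of R; (c) ann(x·y) = ann(x) ∪ ann(y) for all x, y ∈ R. -/
section MonoidWithZero

variable {M : Type*} [MonoidWithZero M]

theorem noZeroDivisors_iff_forall_setOf_mul_mul_eq_zero_eq_union :
    NoZeroDivisors M ↔
      ∀ x y : M, {r : M | r * (x * y) = 0} = {r : M | r * x = 0} ∪ {r : M | r * y = 0} := by
  refine ⟨fun _ x y ↦ ?_, fun h ↦ ⟨fun {x y} hxy ↦ ?_⟩⟩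
  · ext r
    simp only [Set.mem_ofPred_eq, Set.mem_union, mul_eq_zero, or_or_distrib_left (a := r = 0)]
  · have one_mem : (1 : M) ∈ {r : M | r * x = 0} ∪ {r : M | r * y = 0} := by
      rw [← h x y, Set.mem_ofPred_eq, hxy, mul_zero]
    simpa only [Set.mem_union, Set.mem_ofPred_eq, one_mul] using one_mem

end MonoidWithZero

section CommRing

variable {R : Type*} [CommRing R]

theorem IsRIdeal.exists_ne_zero_mul_eq_zero {N : Ideal R} (hN : IsRIdeal N) {a : R} (ha : a ∈ N) :
    ∃ r : R, r ≠ 0 ∧ r * a = 0 := by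
  by_contra! a_regular
  have one_mem : (1 : R) ∈ N :=
    hN.2 a 1 (by rwa [mul_one]) fun r ↦ not_imp_not.mp (a_regular r)
  exact hN.1 ((Ideal.eq_top_iff_one N).mpr one_mem)

theorem IsRIdeal.eq_bot [NoZeroDivisors R] {N : Ideal R} (hN : IsRIdeal N) : N = ⊥ := by
  refine (Submodule.eq_bot_iff N).mpr fun a ha ↦ ?_
  obtain ⟨r, hr, hra⟩ := hN.exists_ne_zero_mul_eq_zero ha
  exact (mul_eq_zero.mp hra).resolve_left hr

theorem isRIdeal_torsionOf {M : Type*} [AddCommMonoid M] [Module R M] [Module.IsTorsionFree R M]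
    {m : M} (hm : m ≠ 0) : IsRIdeal (Ideal.torsionOf R M m) := by
  refine ⟨(Ideal.torsionOf_eq_top_iff R m).not.mpr hm, fun a b hab ha ↦ ?_⟩
  have a_regular : IsRegular a :=
    isRegular_iff_mem_nonZeroDivisors.mpr (mem_nonZeroDivisors_iff_right.mpr ha)
  rw [Ideal.mem_torsionOf_iff, mul_smul] at hab
  exact (Ideal.mem_torsionOf_iff m b).mpr (a_regular.isSMulRegular.right_eq_zero_of_smul hab)

theorem noZeroDivisors_iff_forall_isRIdeal_eq_bot :
    NoZeroDivisors R ↔ ∀ N : Ideal R, IsRIdeal N → N = ⊥ := by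
  refine ⟨fun _ _ hN ↦ hN.eq_bot, fun h ↦ ⟨fun {x y} hxy ↦ or_iff_not_imp_right.mpr fun hy ↦ ?_⟩⟩
  have x_mem : x ∈ Ideal.torsionOf R R y := (Ideal.mem_torsionOf_iff y x).mpr hxy
  rwa [h _ (isRIdeal_torsionOf hy), Ideal.mem_bot] at x_mem

end CommRing

/-- for a nontrivial commutative ring `R`, TFAE:
(a) `R` is an integral domain;
(b) the zero ideal is the only `r`-ideal of `R`;
(c) `ann(x * y) = ann(x) ∪ ann(y)` for all `x, y ∈ R`. -/
theorem domain_tfae {R : Type*} [CommRing R] [Nontrivial R] :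
    (IsDomain R ↔ ∀ N : Ideal R, IsRIdeal N → N = ⊥) ∧
    ((∀ N : Ideal R, IsRIdeal N → N = ⊥) ↔
      ∀ x y : R, {r : R | r * (x * y) = 0} = {r : R | r * x = 0} ∪ {r : R | r * y = 0}) := by
  have isDomain_iff : IsDomain R ↔ NoZeroDivisors R :=
    ⟨fun _ ↦ inferInstance, fun _ ↦ NoZeroDivisors.to_isDomain R⟩
  exact ⟨isDomain_iff.trans noZeroDivisors_iff_forall_isRIdeal_eq_bot,
    noZeroDivisors_iff_forall_isRIdeal_eq_bot.symm.trans
      noZeroDivisors_iff_forall_setOf_mul_mul_eq_zero_eq_union⟩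
end

section
/- Let R be a commutative ring and {eᵢ : i ∈ Λ} a set of idempotent elements of R. If the ideal N = Σᵢ∈Λ eᵢ·R generated by these idempotents is a proper ideal of R, then N is an r-ideal. -/
/-!
An ideal generated by idempotents is pure: each `x` in it satisfies `x = x * y` for some `y` in it.
If `a * b` lies in a pure ideal, then `a * b = a * b * y` with `y` in the ideal, and cancelling a
regular `a` leaves `b = b * y`.
-/

section PureIdeals

variable {R : Type*} [CommRing R]

theorem pure_iff_forall_exists_eq_mul {I : Ideal R} :
    I.Pure ↔ ∀ x ∈ I, ∃ y ∈ I, x = x * y := by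
  refine ⟨fun _ _ hx => Ideal.exists_eq_mul_of_pure hx, fun h => .of_inf_eq_mul I fun J _ => ?_⟩
  refine le_antisymm (fun x ⟨hxI, hxJ⟩ => ?_) Ideal.mul_le_inf
  obtain ⟨y, hyI, hxy⟩ := h x hxI
  rw [hxy]
  exact Ideal.mul_mem_mul_rev hyI hxJ

theorem pure_iSup {ι : Sort*} (I : ι → Ideal R) [∀ i, (I i).Pure] : (⨆ i, I i).Pure := by
  refine pure_iff_forall_exists_eq_mul.mpr fun x hx => ?_
  induction hx using Submodule.iSup_induction' with
  | mem i x hx =>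
    obtain ⟨y, hy, hxy⟩ := Ideal.exists_eq_mul_of_pure hx
    exact ⟨y, Ideal.mem_iSup_of_mem i hy, hxy⟩
  | zero => exact ⟨0, zero_mem _, (zero_mul 0).symm⟩
  | add x₁ x₂ _ _ ih₁ ih₂ =>
    obtain ⟨y₁, hy₁, hxy₁⟩ := ih₁
    obtain ⟨y₂, hy₂, hxy₂⟩ := ih₂
    -- `1 - (y₁ + y₂ - y₁ * y₂) = (1 - y₁) * (1 - y₂)` annihilates both `x₁` and `x₂`.
    refine ⟨y₁ + y₂ - y₁ * y₂, sub_mem (add_mem hy₁ hy₂) (Ideal.mul_mem_left _ y₁ hy₂), ?_⟩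
    linear_combination (1 - y₂) * hxy₁ + (1 - y₁) * hxy₂

theorem pure_span_singleton_of_isIdempotentElem {e : R} (he : IsIdempotentElem e) :
    (Ideal.span {e}).Pure :=
  .of_isIdempotentElem (Submodule.fg_span_singleton e) <| by
    rw [IsIdempotentElem, Ideal.span_singleton_mul_span_singleton, he.eq]

theorem isRIdeal_of_pure {N : Ideal R} [N.Pure] (hN : N ≠ ⊤) : IsRIdeal N := by
  refine ⟨hN, fun a b hab ha => ?_⟩
  obtain ⟨y, hy, hab_eq⟩ := Ideal.exists_eq_mul_of_pure hab
  have hb : b - b * y = 0 := ha _ (by linear_combination hab_eq)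
  rw [sub_eq_zero.mp hb]
  exact N.mul_mem_left b hy

end PureIdeals

/-- if `{eᵢ}` is a family of idempotents and `N = Σᵢ eᵢR` is proper,
then `N` is an `r`-ideal. -/
theorem sum_idempotents_isRIdeal {R : Type*} [CommRing R] {Λ : Type*} (e : Λ → R)
    (hidem : ∀ i, e i * e i = e i)
    (hproper : (⨆ i, Ideal.span {e i}) ≠ ⊤) :
    IsRIdeal (⨆ i, Ideal.span {e i}) := by
  have (i : Λ) : (Ideal.span {e i}).Pure := pure_span_singleton_of_isIdempotentElem (hidem i)
  have : (⨆ i, Ideal.span {e i}).Pure := pure_iSup fun i => Ideal.span {e i}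
  exact isRIdeal_of_pure hproper
end

section
/- Let R be a commutative ring and N a proper ideal of R. Then N is a pr-ideal if and only if the radical √N is an r-ideal. -/
theorem mem_radical_of_mul_mem_radical {R : Type*} [CommSemiring R] {S : Submonoid R}
    {N : Ideal R} (hS : ∀ a ∈ S, ∀ b, a * b ∈ N → b ∈ N.radical) {a b : R} (ha : a ∈ S)
    (hab : a * b ∈ N.radical) : b ∈ N.radical := by
  obtain ⟨n, hn⟩ := hab
  have pow_mul_pow_mem : a ^ n * b ^ n ∈ N := mul_pow a b n ▸ hn
  have pow_mem_radical : b ^ n ∈ N.radical := hS _ (S.pow_mem ha n) _ pow_mul_pow_mem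
  exact N.radical_isRadical ⟨n, pow_mem_radical⟩

/-- a proper ideal `N` is a `pr`-ideal iff `√N` is an `r`-ideal. -/
theorem prIdeal_iff_radical_rIdeal {R : Type*} [CommRing R] (N : Ideal R)
    (hN : N ≠ ⊤) :
    (∀ a b : R, a * b ∈ N → (∀ r : R, r * a = 0 → r = 0) → ∃ n : ℕ, b ^ n ∈ N) ↔
      IsRIdeal N.radical := by
  simp only [IsRIdeal, ← mem_nonZeroDivisors_iff_right, ← Ideal.mem_radical_iff]
  constructor
  · intro hpr
    have radical_ne_top : N.radical ≠ ⊤ := Ideal.radical_eq_top.not.mpr hN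
    exact ⟨radical_ne_top, fun a b hab ha =>
      mem_radical_of_mul_mem_radical (fun c hc d hcd => hpr c d hcd hc) ha hab⟩
  · rintro ⟨-, hr⟩ a b hab ha
    exact hr a b (Ideal.le_radical hab) ha
end

section
/- Let R be a commutative ring. Every proper z⁰-ideal of R is an r-ideal. -/
theorem setOf_mul_mul_right_eq_zero {S : Type*} [SemigroupWithZero S] {a : S}
    (ha : ∀ r : S, r * a = 0 → r = 0) (b : S) :
    {r : S | r * (b * a) = 0} = {r : S | r * b = 0} := by
  ext r
  calc r * (b * a) = 0
    _ ↔ r * b * a = 0 := by rw [mul_assoc]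
    _ ↔ r * b = 0 := ⟨ha (r * b), fun hrb => by rw [hrb, zero_mul]⟩

/-- every proper `z⁰`-ideal is an `r`-ideal. A `z⁰`-ideal is an ideal
`N` such that `a ∈ N`, `b ∈ R` and `ann(a) = ann(b)` imply `b ∈ N`. -/
theorem z0Ideal_isRIdeal {R : Type*} [CommRing R] (N : Ideal R) (hN : N ≠ ⊤)
    (hz0 : ∀ a ∈ N, ∀ b : R, {r : R | r * a = 0} = {r : R | r * b = 0} → b ∈ N) :
    IsRIdeal N := by
  refine ⟨hN, fun a b hab ha => ?_⟩
  have hba : b * a ∈ N := mul_comm a b ▸ hab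
  exact hz0 (b * a) hba b (setOf_mul_mul_right_eq_zero ha b)
end
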